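/- In any relativized Boolean algebra, for each X the set π₁(X) = {Z : 1_Z = 1_X} is a Boolean algebra under the inherited operations, with top element 1_X and bottom element 0_X: π₁(X) is closed under ¬, ∧ and ∨, and for all Y, Z ∈ π₁(X) one has Y ∨ ¬Y = 1_X, Y ∧ ¬Y = 0_X, Y ∧ 1_X = Y, and Y ∨ 0_X = Y. -/

import Mathlib

/-!
The law `Z ∨ 1 = Z ∨ ¬Z` says that `1_Z = Z ∨ 1`, so `Z ↦ 1_Z` commutes with `∧` and `∨` by
distributivity, and membership in `π₁(X)` is preserved by both. The identity `Y ∧ 1_Y = Y` follows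
by expanding `Y ∧ (Y ∨ 1)`, its dual `Y ∨ 0_Y = Y` is obtained from it through De Morgan's laws,
and `0_Y = ¬1_Y` shows that the bottom element depends only on `1_Y`.
-/

structure RBA (α : Type*) where
  meet : α → α → α
  join : α → α → α
  compl : α → α
  bot : α
  top : α
  meet_assoc : ∀ x y z, meet (meet x y) z = meet x (meet y z)
  meet_comm : ∀ x y, meet x y = meet y x
  join_assoc : ∀ x y z, join (join x y) z = join x (join y z)
  join_comm : ∀ x y, join x y = join y x
  meet_distrib : ∀ x y z, meet x (join y z) = join (meet x y) (meet x z)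
  join_distrib : ∀ x y z, join x (meet y z) = meet (join x y) (join x z)
  demorgan_meet : ∀ x y, compl (meet x y) = join (compl x) (compl y)
  demorgan_join : ∀ x y, compl (join x y) = meet (compl x) (compl y)
  meet_idem : ∀ x, meet x x = x
  join_idem : ∀ x, join x x = x
  meet_top : ∀ x, meet x top = x
  compl_compl : ∀ x, compl (compl x) = x
  join_top : ∀ x, join x top = join x (compl x)
  meet_bot : ∀ x, meet x bot = bot
  rb5 : ∀ x y,
    meet (join x (compl x)) (join y (compl y)) = join x (compl x) →
    compl (meet y (join x (compl x))) = meet (compl y) (join x (compl x))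

namespace RBA
variable {α : Type*}

/-- `1_X := X ∨ ¬X` -/
def one (R : RBA α) (x : α) : α := R.join x (R.compl x)

/-- `0_X := X ∧ ¬X` -/
def zero (R : RBA α) (x : α) : α := R.meet x (R.compl x)

/-- `ge R y x` means `y ≥ x`, i.e. `x ∧ y = x`. -/
def ge (R : RBA α) (y x : α) : Prop := R.meet x y = x

end RBA

namespace RBA
variable {α : Type*}

theorem one_eq_join_top (R : RBA α) (y : α) : R.one y = R.join y R.top :=
  (R.join_top y).symm

theorem one_compl (R : RBA α) (y : α) : R.one (R.compl y) = R.one y := by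
  unfold one
  rw [R.compl_compl, R.join_comm]

theorem one_meet (R : RBA α) (y z : α) : R.one (R.meet y z) = R.meet (R.one y) (R.one z) := by
  simp only [one_eq_join_top]
  rw [R.join_comm, R.join_distrib, R.join_comm _ y, R.join_comm _ z]

theorem one_join (R : RBA α) (y z : α) : R.one (R.join y z) = R.join (R.one y) (R.one z) := by
  simp only [one_eq_join_top]
  rw [R.join_assoc y R.top, ← R.join_assoc R.top z, R.join_comm R.top z, R.join_assoc z,
    R.join_idem, R.join_assoc]

theorem meet_one (R : RBA α) (y : α) : R.meet y (R.one y) = y := by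
  rw [one_eq_join_top, R.meet_distrib, R.meet_idem, R.meet_top, R.join_idem]

theorem zero_eq_compl_one (R : RBA α) (y : α) : R.zero y = R.compl (R.one y) := by
  unfold zero one
  rw [R.demorgan_join, R.compl_compl, R.meet_comm]

theorem join_zero (R : RBA α) (y : α) : R.join y (R.zero y) = y := by
  rw [zero_eq_compl_one, ← R.compl_compl (R.join y _), R.demorgan_join, R.compl_compl,
    ← one_compl, meet_one, R.compl_compl]

end RBA

/-- For each `X`, the set `π₁(X) = {Z : 1_Z = 1_X}` is a Boolean algebra under the
inherited operations, with top `1_X` and bottom `0_X`: it is closed under `¬`, `∧`, `∨`,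
and for all `Y, Z ∈ π₁(X)`: `Y ∨ ¬Y = 1_X`, `Y ∧ ¬Y = 0_X`, `Y ∧ 1_X = Y`, `Y ∨ 0_X = Y`. -/
theorem stmt5 {α : Type*} (R : RBA α) (x : α) :
    (∀ z, R.one z = R.one x → R.one (R.compl z) = R.one x) ∧
    (∀ y z, R.one y = R.one x → R.one z = R.one x → R.one (R.meet y z) = R.one x) ∧
    (∀ y z, R.one y = R.one x → R.one z = R.one x → R.one (R.join y z) = R.one x) ∧
    (∀ y, R.one y = R.one x → R.join y (R.compl y) = R.one x) ∧
    (∀ y, R.one y = R.one x → R.meet y (R.compl y) = R.zero x) ∧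
    (∀ y, R.one y = R.one x → R.meet y (R.one x) = y) ∧
    (∀ y, R.one y = R.one x → R.join y (R.zero x) = y) := by
  have hz : ∀ y, R.one y = R.one x → R.zero y = R.zero x := fun y h => by
    rw [R.zero_eq_compl_one, h, ← R.zero_eq_compl_one]
  refine ⟨fun z h => (R.one_compl z).trans h, fun y z hy hz => ?_, fun y z hy hz => ?_,
    fun y h => h, hz, fun y h => ?_, fun y h => ?_⟩
  · rw [R.one_meet, hy, hz, R.meet_idem]
  · rw [R.one_join, hy, hz, R.join_idem]
  · rw [← h, R.meet_one]
  · rw [← hz y h, R.join_zero]
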